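/- arXiv:2202.08308 — 2 statements merged into one kernel-verified Lean document; each statement's English description precedes it below -/
import Mathlib

section
/- Let n be any positive integer, λ any infinite cardinal, and A an arbitrary countably infinite subset of λ. If 𝓘_λ^n carries an ω-bounded-pracompact shift-continuous T₁-topology (so it is an ω-bounded-pracompact T₁-semitopological semigroup), then 𝓘_A^n ∖ 𝓘_A^{n−1} is a dense subset of the subspace 𝓘_A^n, and consequently the subspace 𝓘_A^n is compact. -/
/-!
For a pair `p`, the set of elements whose graph contains `p = (x, y)` is clopen: the continuous
map `β ↦ ε_x β ε_y`, with `ε_x` the identity of `{x}`, takes only the values `{p}` and `𝟎`, the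
former exactly when `p ∈ β`, and points are closed (`isClopen_mem_graph`). Two consequences:

* elements of rank `n` are isolated, because they are maximal (`isOpen_singleton_of_rank`), so they
  all belong to the dense set `D` witnessing ω-bounded-pracompactness;
* `𝓘_A^n` is closed (`isClosed_restrictedTo`).

Let `C` be the countable set of rank-`n` elements of `𝓘_A^n`. As `C ⊆ D`, its closure is compact.
Given `α ∈ 𝓘_A^n`, extend it to rank-`n` elements `β_i ∈ C` with the sets `β_i ∖ α` pairwise
disjoint (`exists_extensions`). A cluster point of `(β_i)` contains every pair of `α`, and no
other pair since such a pair lies in at most one `β_i`; hence it is `α`, and `α ∈ closure C`.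
Therefore `𝓘_A^n` is a closed subset of the compact set `closure C`.
-/

open Set Topology Filter

/-- The symmetric inverse semigroup `𝓘_γ^n` of partial bijections of the set `γ`
of rank `≤ n`, represented by their (finite) graphs. -/
structure SymInvSg (γ : Type*) (n : ℕ) where
  graph : Set (γ × γ)
  inj' : ∀ ⦃x y x' y'⦄, (x, y) ∈ graph → (x', y') ∈ graph → (x = x' ↔ y = y')
  finite' : graph.Finite
  card_le' : graph.ncard ≤ n

namespace SymInvSg

variable {γ : Type*} {n : ℕ}

theorem ext' {a b : SymInvSg γ n} (h : a.graph = b.graph) : a = b := by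
  cases a; cases b; simpa using h

/-- Composition of partial bijections (in the left-to-right convention of
transformation semigroups, the choice of convention being immaterial). -/
instance : Mul (SymInvSg γ n) where
  mul a b :=
    { graph := {p | ∃ y, (p.1, y) ∈ a.graph ∧ (y, p.2) ∈ b.graph}
      inj' := by
        rintro x z x' z' ⟨y, hxy, hyz⟩ ⟨y', hxy', hyz'⟩
        constructor
        · rintro rfl
          have hy : y = y' := (a.inj' hxy hxy').mp rfl
          subst hy
          exact (b.inj' hyz hyz').mp rfl
        · rintro rfl
          have hy : y = y' := (b.inj' hyz hyz').mpr rfl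
          subst hy
          exact (a.inj' hxy hxy').mpr rfl
      finite' := by
        have : {p : γ × γ | ∃ y, (p.1, y) ∈ a.graph ∧ (y, p.2) ∈ b.graph} ⊆
            (fun q : (γ × γ) × (γ × γ) => (q.1.1, q.2.2)) '' (a.graph ×ˢ b.graph) := by
          rintro ⟨x, z⟩ ⟨y, hxy, hyz⟩
          exact ⟨((x, y), (y, z)), ⟨hxy, hyz⟩, rfl⟩
        exact Set.Finite.subset (Set.Finite.image _ (a.finite'.prod b.finite')) this
      card_le' := by
        have hinj : Set.InjOn Prod.fst
            {p : γ × γ | ∃ y, (p.1, y) ∈ a.graph ∧ (y, p.2) ∈ b.graph} := by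
          rintro ⟨x, z⟩ ⟨y, hxy, hyz⟩ ⟨x', z'⟩ ⟨y', hxy', hyz'⟩ h
          simp only at h
          subst h
          have hy : y = y' := (a.inj' hxy hxy').mp rfl
          subst hy
          have hz : z = z' := (b.inj' hyz hyz').mp rfl
          simp [hz]
        calc ({p : γ × γ | ∃ y, (p.1, y) ∈ a.graph ∧ (y, p.2) ∈ b.graph}).ncard
            ≤ (Prod.fst '' a.graph).ncard := by
              refine Set.ncard_le_ncard_of_injOn Prod.fst ?_ hinj (a.finite'.image _)
              rintro ⟨x, z⟩ hp
              exact ⟨(x, hp.choose), hp.choose_spec.1, rfl⟩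
          _ ≤ a.graph.ncard := Set.ncard_image_le a.finite'
          _ ≤ n := a.card_le' }

theorem mul_graph (a b : SymInvSg γ n) :
    (a * b).graph = {p : γ × γ | ∃ y, (p.1, y) ∈ a.graph ∧ (y, p.2) ∈ b.graph} := rfl

instance : Semigroup (SymInvSg γ n) where
  mul_assoc a b c := by
    refine ext' ?_
    simp only [mul_graph]
    ext ⟨x, w⟩
    constructor
    · rintro ⟨z, ⟨y, hxy, hyz⟩, hzw⟩
      exact ⟨y, hxy, z, hyz, hzw⟩
    · rintro ⟨y, hxy, z, hyz, hzw⟩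
      exact ⟨z, ⟨y, hxy, hyz⟩, hzw⟩

/-- The zero of `𝓘_γ^n` is the empty partial map. -/
instance : Zero (SymInvSg γ n) :=
  ⟨{ graph := ∅
     inj' := by simp
     finite' := Set.finite_empty
     card_le' := by simp }⟩

/-- The natural partial order on the inverse semigroup `𝓘_γ^n`:
`α ≼ β` iff the graph of `α` is contained in the graph of `β`. -/
instance : PartialOrder (SymInvSg γ n) where
  le a b := a.graph ⊆ b.graph
  le_refl a := subset_rfl
  le_trans a b c h₁ h₂ := Set.Subset.trans h₁ h₂
  le_antisymm a b h₁ h₂ := ext' (subset_antisymm h₁ h₂)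

/-- The rank of a partial bijection: the cardinality of its domain
(equivalently, of its graph). -/
noncomputable def rank (a : SymInvSg γ n) : ℕ := a.graph.ncard

/-- `𝓘_A^n`: the subsemigroup of partial bijections with domain and range inside `A`. -/
def restrictedTo (A : Set γ) : Set (SymInvSg γ n) :=
  {α | ∀ p ∈ α.graph, p.1 ∈ A ∧ p.2 ∈ A}

end SymInvSg

/-- A topology is shift-continuous when all left and right translations are continuous,
i.e. the space is a semitopological semigroup. -/
def ShiftContinuous (X : Type*) [TopologicalSpace X] [Mul X] : Prop :=
  ∀ a : X, Continuous (fun x => a * x) ∧ Continuous (fun x => x * a)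

/-- A space is feebly compact if every locally finite family of nonempty open sets is finite. -/
def FeeblyCompact (X : Type*) [TopologicalSpace X] : Prop :=
  ∀ F : Set (Set X), (∀ U ∈ F, IsOpen U ∧ U.Nonempty) →
    LocallyFinite (fun U : F => (U : Set X)) → F.Finite

/-- A space is sequentially pracompact if it has a dense subset `D` such that every
sequence in `D` has a convergent subsequence. -/
def SequentiallyPracompact (X : Type*) [TopologicalSpace X] : Prop :=
  ∃ D : Set X, Dense D ∧ ∀ u : ℕ → X, (∀ k, u k ∈ D) →
    ∃ (x : X) (φ : ℕ → ℕ), StrictMono φ ∧ Filter.Tendsto (u ∘ φ) Filter.atTop (nhds x)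

/-- A space is totally countably pracompact if it has a dense subset `D` such that every
sequence in `D` has a subsequence whose closure is compact. -/
def TotallyCountablyPracompact (X : Type*) [TopologicalSpace X] : Prop :=
  ∃ D : Set X, Dense D ∧ ∀ u : ℕ → X, (∀ k, u k ∈ D) →
    ∃ φ : ℕ → ℕ, StrictMono φ ∧ IsCompact (closure (Set.range (u ∘ φ)))

/-- A space is countably pracompact if it has a dense subset `A` such that every infinite
subset of `A` has an accumulation point in the space. -/
def CountablyPracompact (X : Type*) [TopologicalSpace X] : Prop :=
  ∃ A : Set X, Dense A ∧ ∀ B ⊆ A, B.Infinite → ∃ x : X, AccPt x (Filter.principal B)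

/-- A space is ω-bounded-pracompact if it has a dense subset `D` such that every countable
subset of `D` has compact closure. -/
def OmegaBoundedPracompact (X : Type*) [TopologicalSpace X] : Prop :=
  ∃ D : Set X, Dense D ∧ ∀ C ⊆ D, C.Countable → IsCompact (closure C)

/-- A space is feebly ω-bounded if for every sequence of nonempty open sets there is a
compact set meeting all of them. -/
def FeeblyOmegaBounded (X : Type*) [TopologicalSpace X] : Prop :=
  ∀ U : ℕ → Set X, (∀ k, IsOpen (U k) ∧ (U k).Nonempty) →
    ∃ K : Set X, IsCompact K ∧ ∀ k, (K ∩ U k).Nonempty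
namespace SymInvSg

variable {γ : Type*} {n : ℕ}

/-! ### Rank-one elements -/

/-- The partial bijection of rank one with graph `{p}`. -/
def single (hn : 0 < n) (p : γ × γ) : SymInvSg γ n where
  graph := {p}
  inj' := by
    rintro x y x' y' rfl h
    simp only [mem_singleton_iff, Prod.mk.injEq] at h
    simp [h.1, h.2]
  finite' := Set.finite_singleton p
  card_le' := by
    rw [Set.ncard_singleton]
    exact hn

theorem single_mul_mul_single_of_mem (hn : 0 < n) {x y : γ} {β : SymInvSg γ n}
    (h : (x, y) ∈ β.graph) :
    single hn (x, x) * β * single hn (y, y) = single hn (x, y) := by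
  refine ext' ?_
  ext ⟨u, v⟩
  simp only [mul_graph, single, mem_ofPred_eq, mem_singleton_iff, Prod.mk.injEq]
  constructor
  · rintro ⟨z, ⟨w, ⟨rfl, rfl⟩, -⟩, rfl, rfl⟩
    exact ⟨rfl, rfl⟩
  · rintro ⟨rfl, rfl⟩
    exact ⟨v, ⟨u, ⟨rfl, rfl⟩, h⟩, rfl, rfl⟩

theorem single_mul_mul_single_of_notMem (hn : 0 < n) {x y : γ} {β : SymInvSg γ n}
    (h : (x, y) ∉ β.graph) :
    single hn (x, x) * β * single hn (y, y) = 0 := by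
  refine ext' (Set.eq_empty_of_forall_notMem ?_)
  rintro ⟨u, v⟩
  simp only [mul_graph, single, mem_ofPred_eq, mem_singleton_iff, Prod.mk.injEq]
  rintro ⟨z, ⟨w, ⟨rfl, rfl⟩, hw⟩, rfl, rfl⟩
  exact h hw

theorem single_ne_zero (hn : 0 < n) (p : γ × γ) : single hn p ≠ 0 := by
  intro h
  have hp : p ∈ (single hn p).graph := rfl
  rw [h] at hp
  exact hp

/-! ### Clopen sets determined by a pair -/

theorem isClopen_mem_graph (hn : 0 < n)
    [TopologicalSpace (SymInvSg γ n)] [T1Space (SymInvSg γ n)]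
    (hsc : ShiftContinuous (SymInvSg γ n)) (p : γ × γ) :
    IsClopen {β : SymInvSg γ n | p ∈ β.graph} := by
  obtain ⟨x, y⟩ := p
  have hcont : Continuous
      (fun β : SymInvSg γ n => single hn (x, x) * β * single hn (y, y)) :=
    (hsc (single hn (y, y))).2.comp (hsc (single hn (x, x))).1
  constructor
  · convert (isClosed_singleton (x := single hn (x, y))).preimage hcont using 1
    ext β
    by_cases h : (x, y) ∈ β.graph
    · simp [h, single_mul_mul_single_of_mem hn h]
    · simp [h, single_mul_mul_single_of_notMem hn h, (single_ne_zero hn (x, y)).symm]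
  · convert (isOpen_compl_singleton (x := (0 : SymInvSg γ n))).preimage hcont using 1
    ext β
    by_cases h : (x, y) ∈ β.graph
    · simp [h, single_mul_mul_single_of_mem hn h, single_ne_zero hn (x, y)]
    · simp [h, single_mul_mul_single_of_notMem hn h]

theorem isOpen_singleton_of_rank (hn : 0 < n)
    [TopologicalSpace (SymInvSg γ n)] [T1Space (SymInvSg γ n)]
    (hsc : ShiftContinuous (SymInvSg γ n)) {α : SymInvSg γ n} (hα : n ≤ rank α) :
    IsOpen {α} := by
  have h : ({α} : Set (SymInvSg γ n)) = ⋂ p ∈ α.graph, {β | p ∈ β.graph} := by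
    ext β
    simp only [mem_singleton_iff, mem_iInter, mem_ofPred_eq]
    constructor
    · rintro rfl p hp
      exact hp
    · intro hsub
      exact ext' (Set.eq_of_subset_of_ncard_le hsub (β.card_le'.trans hα) β.finite').symm
  rw [h]
  exact α.finite'.isOpen_biInter fun p _ => (isClopen_mem_graph hn hsc p).2

theorem isClosed_restrictedTo (hn : 0 < n)
    [TopologicalSpace (SymInvSg γ n)] [T1Space (SymInvSg γ n)]
    (hsc : ShiftContinuous (SymInvSg γ n)) (A : Set γ) :
    IsClosed (restrictedTo A : Set (SymInvSg γ n)) := by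
  have h : (restrictedTo A : Set (SymInvSg γ n)) =
      ⋂ p ∈ {p : γ × γ | ¬ (p.1 ∈ A ∧ p.2 ∈ A)}, {β | p ∈ β.graph}ᶜ := by
    ext β
    simp only [restrictedTo, mem_iInter, mem_ofPred_eq, mem_compl_iff]
    exact forall_congr' fun p => not_imp_not.symm
  rw [h]
  exact isClosed_biInter fun p _ => (isClopen_mem_graph hn hsc p).2.isClosed_compl

/-! ### Elements of `𝓘_A^n` and their extensions of full rank -/

theorem countable_restrictedTo {A : Set γ} (hA : A.Countable) :
    (restrictedTo A : Set (SymInvSg γ n)).Countable := by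
  have hc : {t : Set (γ × γ) | t.Finite ∧ t ⊆ A ×ˢ A}.Countable :=
    Set.countable_ofPred_finite_subset (hA.prod hA)
  refine Set.MapsTo.countable_of_injOn (f := graph) (fun β hβ => ?_)
    (fun a _ b _ h => ext' h) hc
  exact ⟨β.finite', fun p hp => hβ p hp⟩

/-- Every `α ∈ 𝓘_A^n` has a sequence of rank-`n` extensions in `𝓘_A^n` no two of which share a
pair outside `α`. The extensions add identity pairs over pairwise disjoint sets of points of `A`
that avoid the domain and the range of `α`. -/
theorem exists_extensions {A : Set γ} (hA : A.Infinite) {α : SymInvSg γ n}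
    (hα : α ∈ (restrictedTo A : Set (SymInvSg γ n))) :
    ∃ β : ℕ → SymInvSg γ n, (∀ i, β i ∈ (restrictedTo A : Set (SymInvSg γ n))) ∧
      (∀ i, n ≤ rank (β i)) ∧ (∀ i, α.graph ⊆ (β i).graph) ∧
      ∀ p ∉ α.graph, ∀ i j, p ∈ (β i).graph → p ∈ (β j).graph → i = j := by
  have hfin : (Prod.fst '' α.graph ∪ Prod.snd '' α.graph).Finite :=
    (α.finite'.image _).union (α.finite'.image _)
  have hB := (hA.sdiff hfin).natEmbedding
  let f : ℕ → ℕ → γ := fun i j => (hB (Nat.pair i j) : γ)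
  have hf : ∀ {i j i' j'}, f i j = f i' j' → i = i' ∧ j = j' := fun h =>
    Nat.pair_eq_pair.mp (hB.injective (Subtype.ext h))
  have hfA : ∀ i j, f i j ∈ A := fun i j => (hB (Nat.pair i j)).2.1
  have hf1 : ∀ {i j y}, (f i j, y) ∉ α.graph := fun {i j y} h =>
    (hB (Nat.pair i j)).2.2 (Or.inl ⟨_, h, rfl⟩)
  have hf2 : ∀ {i j x}, (x, f i j) ∉ α.graph := fun {i j x} h =>
    (hB (Nat.pair i j)).2.2 (Or.inr ⟨_, h, rfl⟩)
  let T : ℕ → Set (γ × γ) := fun i => (fun j => (f i j, f i j)) '' Iio (n - rank α)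
  have hTfin : ∀ i, (T i).Finite := fun i => (Set.finite_Iio _).image _
  have hTcard : ∀ i, (T i).ncard = n - rank α := fun i => by
    rw [Set.ncard_image_of_injective _ fun j j' h => (hf (Prod.mk.inj h).1).2]
    simp
  have hdisj : ∀ i, Disjoint α.graph (T i) := fun i => by
    rw [Set.disjoint_left]
    rintro _ hp ⟨j, -, rfl⟩
    exact hf1 hp
  have hle : rank α ≤ n := α.card_le'
  have hcard : ∀ i, (α.graph ∪ T i).ncard = n := fun i => by
    rw [Set.ncard_union_eq (hdisj i) α.finite' (hTfin i), hTcard i]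
    exact Nat.add_sub_of_le hle
  refine ⟨fun i => ⟨α.graph ∪ T i, ?_, α.finite'.union (hTfin i), (hcard i).le⟩,
    ?_, fun i => (hcard i).ge, fun i => subset_union_left, ?_⟩
  · rintro x y x' y' (h | ⟨j, -, h⟩) (h' | ⟨j', -, h'⟩)
    · exact α.inj' h h'
    · obtain ⟨rfl, rfl⟩ := Prod.mk.inj h'
      exact ⟨fun e => (hf1 (e ▸ h)).elim, fun e => (hf2 (e ▸ h)).elim⟩
    · obtain ⟨rfl, rfl⟩ := Prod.mk.inj h
      exact ⟨fun e => (hf1 (e ▸ h')).elim, fun e => (hf2 (e ▸ h')).elim⟩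
    · obtain ⟨rfl, rfl⟩ := Prod.mk.inj h
      obtain ⟨rfl, rfl⟩ := Prod.mk.inj h'
      exact Iff.rfl
  · rintro i p (h | ⟨j, -, rfl⟩)
    · exact hα p h
    · exact ⟨hfA i j, hfA i j⟩
  · rintro p hp i i' (h | ⟨j, -, rfl⟩) (h' | ⟨j', -, h'⟩)
    · exact (hp h).elim
    · exact (hp h).elim
    · exact (hp h').elim
    · exact (hf (Prod.mk.inj h').1).1.symm

end SymInvSg

/-- If `𝓘_λ^n` is an ω-bounded-pracompact `T₁`-semitopological semigroup
(`n` a positive integer, `λ` an infinite cardinal) and `A ⊆ λ` is countably infinite, then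
`𝓘_A^n ∖ 𝓘_A^{n-1}` is dense in the subspace `𝓘_A^n`, and `𝓘_A^n` is compact. -/
theorem dense_top_rank_and_isCompact_restrictedTo {γ : Type*} [Infinite γ] {n : ℕ}
    (hn : 0 < n)
    [TopologicalSpace (SymInvSg γ n)] [T1Space (SymInvSg γ n)]
    (hsc : ShiftContinuous (SymInvSg γ n))
    (hωb : OmegaBoundedPracompact (SymInvSg γ n))
    (A : Set γ) (hAc : A.Countable) (hAi : A.Infinite) :
    (SymInvSg.restrictedTo A : Set (SymInvSg γ n)) ⊆
      closure ((SymInvSg.restrictedTo A : Set (SymInvSg γ n)) \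
        {α : SymInvSg γ n | SymInvSg.rank α ≤ n - 1}) ∧
    IsCompact (SymInvSg.restrictedTo A : Set (SymInvSg γ n)) := by
  obtain ⟨D, hD, hDc⟩ := hωb
  set C : Set (SymInvSg γ n) := SymInvSg.restrictedTo A \ {α | SymInvSg.rank α ≤ n - 1} with hC
  have hCD : C ⊆ D := by
    rintro β ⟨-, hβ⟩
    have hrank : n ≤ SymInvSg.rank β := by
      simp only [mem_ofPred_eq] at hβ
      omega
    obtain ⟨d, rfl, hd⟩ := hD.inter_open_nonempty _
      (SymInvSg.isOpen_singleton_of_rank hn hsc hrank) (singleton_nonempty β)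
    exact hd
  have hK : IsCompact (closure C) :=
    hDc C hCD ((SymInvSg.countable_restrictedTo hAc).mono sdiff_subset)
  have hdense : (SymInvSg.restrictedTo A : Set (SymInvSg γ n)) ⊆ closure C := by
    intro α hα
    obtain ⟨β, hβA, hβn, hβα, hβ⟩ := SymInvSg.exists_extensions hAi hα
    have hβC : ∀ i, β i ∈ C := fun i => ⟨hβA i, by
      have := hβn i
      simp only [mem_ofPred_eq]
      omega⟩
    obtain ⟨x, hxC, hx⟩ := hK.exists_mapClusterPt (f := atTop) (u := β)
      (tendsto_principal.mpr (Eventually.of_forall fun i => subset_closure (hβC i)))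
    have hxα : x = α := by
      refine SymInvSg.ext' (Subset.antisymm (fun p hp => ?_) (fun p hp => ?_))
      · by_contra hpα
        have hfreq : ∃ᶠ i in atTop, p ∈ (β i).graph :=
          hx.frequently ((SymInvSg.isClopen_mem_graph hn hsc p).2.mem_nhds hp)
        obtain ⟨i, hi⟩ := hfreq.exists
        obtain ⟨j, hj, hij⟩ := (hfreq.and_eventually (eventually_gt_atTop i)).exists
        exact hij.ne (hβ p hpα i j hi hj)
      · by_contra hpx
        have hfreq : ∃ᶠ i in atTop, p ∉ (β i).graph :=
          hx.frequently ((SymInvSg.isClopen_mem_graph hn hsc p).1.isOpen_compl.mem_nhds hpx)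
        obtain ⟨i, hi⟩ := hfreq.exists
        exact hi (hβα i hp)
    exact hxα ▸ hxC
  exact ⟨hdense, hK.of_isClosed_subset (SymInvSg.isClosed_restrictedTo hn hsc A) hdense⟩
end

section
/- Let n be a positive integer and λ an infinite cardinal, and let τ be a feebly compact shift-continuous T₁-topology on 𝓘_λ^n. If {χ_p : p ∈ ℕ} is a sequence of points of 𝓘_λ^n ∖ 𝓘_λ^{n−1} such that for every nonzero element η ∈ 𝓘_λ^n the set ↑_≼ η ∩ {χ_p : p ∈ ℕ} is finite, then {𝟎} ∪ {χ_p : p ∈ ℕ} is a compact subset of (𝓘_λ^n, τ). -/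
/-!
The idea: for each `α` the up-set `↑α` is open. Indeed, `α ≼ x` iff `ε * x * ε' = α`, where `ε` and
`ε'` are the identities of the domain and of the range of `α`, and the continuous map
`x ↦ ε * x * ε'` takes only finitely many values, so its fibres are open in a `T₁` topology
(`isOpen_Ici`). For `α` of rank `n` the up-set is `{α}`, so each `χ p` is an isolated point.

If `U` is an open neighbourhood of `0`, the family of singletons `{χ p}` with `χ p ∉ U` consists of
nonempty open sets and is locally finite: `U` witnesses this at `0`, and `↑η` at `η ≠ 0`. By feeble
compactness it is finite. So every neighbourhood of `0` contains all but finitely many of the points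
`χ p`, and `{0} ∪ range χ` is compact.
-/

open Set Topology Filter

namespace SymInvSg

variable {γ : Type*} {n : ℕ}

/-- The idempotent of `𝓘_γ^n` that is the identity map of the set `A`, where `|A| ≤ n`. -/
def idOn (A : Set γ) (hA : A.Finite) (hc : A.ncard ≤ n) : SymInvSg γ n where
  graph := (fun a => (a, a)) '' A
  inj' := by
    rintro x y x' y' ⟨a, _, h⟩ ⟨b, _, h'⟩
    simp only [Prod.mk.injEq] at h h'
    rw [← h.1, ← h.2, ← h'.1, ← h'.2]
  finite' := hA.image _
  card_le' := (Set.ncard_image_le hA).trans hc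

theorem mem_idOn_mul_mul {A B : Set γ} (hA : A.Finite) (hAc : A.ncard ≤ n)
    (hB : B.Finite) (hBc : B.ncard ≤ n) (x : SymInvSg γ n) (p : γ × γ) :
    p ∈ (idOn A hA hAc * x * idOn B hB hBc).graph ↔ p ∈ x.graph ∧ p.1 ∈ A ∧ p.2 ∈ B := by
  obtain ⟨a, b⟩ := p
  simp only [mul_graph, idOn, Set.mem_ofPred_eq, Set.mem_image, Prod.mk.injEq]
  constructor
  · rintro ⟨y, ⟨z, ⟨_, hA, rfl, rfl⟩, hx⟩, ⟨_, hB, rfl, rfl⟩⟩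
    exact ⟨hx, hA, hB⟩
  · rintro ⟨hx, hA, hB⟩
    exact ⟨b, ⟨a, ⟨a, hA, rfl, rfl⟩, hx⟩, ⟨b, hB, rfl, rfl⟩⟩

theorem isOpen_Ici [TopologicalSpace (SymInvSg γ n)] [T1Space (SymInvSg γ n)]
    (hsc : ShiftContinuous (SymInvSg γ n)) (α : SymInvSg γ n) : IsOpen (Set.Ici α) := by
  have hA : (Prod.fst '' α.graph).Finite := α.finite'.image _
  have hB : (Prod.snd '' α.graph).Finite := α.finite'.image _
  have hAc : (Prod.fst '' α.graph).ncard ≤ n := (Set.ncard_image_le α.finite').trans α.card_le'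
  have hBc : (Prod.snd '' α.graph).ncard ≤ n := (Set.ncard_image_le α.finite').trans α.card_le'
  set f : SymInvSg γ n → SymInvSg γ n := fun x => idOn _ hA hAc * x * idOn _ hB hBc with hf
  have hcont : Continuous f := (hsc (idOn _ hB hBc)).2.comp (hsc (idOn _ hA hAc)).1
  have hmem : ∀ x p, p ∈ (f x).graph ↔
      p ∈ x.graph ∧ p.1 ∈ Prod.fst '' α.graph ∧ p.2 ∈ Prod.snd '' α.graph :=
    fun x p => mem_idOn_mul_mul hA hAc hB hBc x p
  have hfinite : (Set.range f).Finite := by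
    refine Set.Finite.of_finite_image (f := SymInvSg.graph) ?_ (fun a _ b _ h => ext' h)
    refine (hA.prod hB).finite_subsets.subset ?_
    rintro _ ⟨_, ⟨x, rfl⟩, rfl⟩ p hp
    exact ((hmem x p).1 hp).2
  have hIci : Set.Ici α = (f ⁻¹' (Set.range f \ {α}))ᶜ := by
    ext x
    have key : α ≤ x ↔ f x = α := by
      constructor
      · intro h
        refine ext' (Set.ext fun p => ?_)
        rw [hmem]
        constructor
        · rintro ⟨hx, ⟨q, hq, hqp⟩, -⟩
          -- `q ∈ α ⊆ x` and `p ∈ x` have the same first coordinate, hence coincide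
          have h2 := (x.inj' (x := q.1) (y := q.2) (x' := p.1) (y' := p.2) (h hq) hx).1 hqp
          rwa [← Prod.ext hqp h2]
        · exact fun hp => ⟨h hp, ⟨p, hp, rfl⟩, ⟨p, hp, rfl⟩⟩
      · intro h p hp
        rw [← h] at hp
        exact ((hmem x p).1 hp).1
    simp [key]
  rw [hIci]
  exact ((hfinite.subset Set.sdiff_subset).isClosed.preimage hcont).isOpen_compl

theorem Ici_eq_singleton {α : SymInvSg γ n} (h : α.rank = n) : Set.Ici α = {α} := by
  ext x
  refine ⟨fun hx => ?_, fun hx => le_of_eq (Eq.symm hx)⟩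
  exact (ext' (Set.eq_of_subset_of_ncard_le hx (x.card_le'.trans h.ge) x.finite')).symm

end SymInvSg

/-- Let `τ` be a feebly compact shift-continuous `T₁`-topology on `𝓘_λ^n`
(`n` a positive integer, `λ` an infinite cardinal). If `{χ_p : p ∈ ℕ}` is a sequence of
elements of rank exactly `n` such that `↑_≼ η ∩ {χ_p : p ∈ ℕ}` is finite for every nonzero
`η`, then `{𝟎} ∪ {χ_p : p ∈ ℕ}` is compact. -/
theorem isCompact_zero_union_range {γ : Type*} [Infinite γ] {n : ℕ} (hn : 0 < n)
    [TopologicalSpace (SymInvSg γ n)] [T1Space (SymInvSg γ n)]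
    (hsc : ShiftContinuous (SymInvSg γ n))
    (hfc : FeeblyCompact (SymInvSg γ n))
    (χ : ℕ → SymInvSg γ n) (hχ : ∀ p, SymInvSg.rank (χ p) = n)
    (hfin : ∀ η : SymInvSg γ n, η ≠ 0 → (Set.Ici η ∩ Set.range χ).Finite) :
    IsCompact ({0} ∪ Set.range χ : Set (SymInvSg γ n)) := by
  have hiso : ∀ p, IsOpen ({χ p} : Set (SymInvSg γ n)) := fun p =>
    SymInvSg.Ici_eq_singleton (hχ p) ▸ SymInvSg.isOpen_Ici hsc (χ p)
  have hU : ∀ U : Set (SymInvSg γ n), IsOpen U → 0 ∈ U → (Set.range χ \ U).Finite := by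
    intro U hUo hU0
    have hF : ((fun x => ({x} : Set (SymInvSg γ n))) '' (Set.range χ \ U)).Finite := by
      apply hfc
      · rintro _ ⟨_, ⟨⟨p, rfl⟩, -⟩, rfl⟩
        exact ⟨hiso p, Set.singleton_nonempty _⟩
      · -- it suffices to find a neighbourhood containing finitely many of the points
        have aux : ∀ V : Set (SymInvSg γ n), (V ∩ (Set.range χ \ U)).Finite →
            {i : ((fun x => ({x} : Set (SymInvSg γ n))) '' (Set.range χ \ U)) |
              ((i : Set (SymInvSg γ n)) ∩ V).Nonempty}.Finite := by
          intro V hV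
          refine Set.Finite.of_finite_image (f := Subtype.val) ?_ Subtype.val_injective.injOn
          refine (hV.image fun x => ({x} : Set (SymInvSg γ n))).subset ?_
          rintro _ ⟨⟨_, x, hx, rfl⟩, ⟨y, hy, hyV⟩, rfl⟩
          obtain rfl : y = x := hy
          exact ⟨y, ⟨hyV, hx⟩, rfl⟩
        intro η
        by_cases hη : η = 0
        · refine ⟨U, hη ▸ hUo.mem_nhds hU0, aux U ?_⟩
          simp
        · exact ⟨Set.Ici η, (SymInvSg.isOpen_Ici hsc η).mem_nhds Set.self_mem_Ici,
            aux _ ((hfin η hη).subset (Set.inter_subset_inter_right _ Set.sdiff_subset))⟩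
    exact hF.of_finite_image Set.singleton_injective.injOn
  rw [isCompact_iff_ultrafilter_le_nhds]
  intro f hf
  by_cases h0 : (f : Filter (SymInvSg γ n)) ≤ 𝓝 0
  · exact ⟨0, by simp, h0⟩
  · obtain ⟨V, hV, hVf⟩ := Filter.not_le.1 h0
    obtain ⟨U, hUV, hUo, hU0⟩ := mem_nhds_iff.1 hV
    have hUf : Uᶜ ∈ f := Ultrafilter.compl_mem_iff_notMem.2
      fun h => hVf (Filter.mem_of_superset h hUV)
    have hmem : Set.range χ \ U ∈ f := by
      filter_upwards [hUf, Filter.le_principal_iff.1 hf] with x hx hxs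
      rcases hxs with rfl | hxs
      · exact absurd hU0 hx
      · exact ⟨hxs, hx⟩
    obtain ⟨x, hx, hfx⟩ := isCompact_iff_ultrafilter_le_nhds.1 (hU U hUo hU0).isCompact f
      (Filter.le_principal_iff.2 hmem)
    exact ⟨x, Or.inr hx.1, hfx⟩
end
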